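/- Let S be a commutative, cancellative monoid such that L(s) is finite for all s ∈ S, and let m ∈ 𝒜(S). Then ℓ(s + m) = ℓ(s) + 1 for all s ∈ S if and only if ℓ(φ_S(c_a)) = ℓ(−m + φ_S(c_a)) + 1 for all (c_a) ∈ MinRepl_m(S). -/

import Mathlib

namespace Paper

/-- The additive congruence on `S` identifying associate elements
(`s ∼ t` iff `s + u = t` for some additive unit `u`). -/
def assocCon (S : Type*) [AddCancelCommMonoid S] : AddCon S where
  r s t := ∃ u : AddUnits S, s + (u : S) = t
  iseqv := by
    refine ⟨fun s => ⟨0, by simp⟩, ?_, ?_⟩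
    · rintro s t ⟨u, rfl⟩
      exact ⟨-u, by rw [add_assoc, AddUnits.add_neg, add_zero]⟩
    · rintro s t w ⟨u, rfl⟩ ⟨v, rfl⟩
      exact ⟨u + v, by rw [AddUnits.val_add, add_assoc]⟩
  add' := by
    rintro a b c d ⟨u, rfl⟩ ⟨v, rfl⟩
    refine ⟨u + v, ?_⟩
    rw [AddUnits.val_add]
    abel

/-- The reduced monoid `S_red = S / U(S)`. -/
abbrev Red (S : Type*) [AddCancelCommMonoid S] := (assocCon S).Quotient

variable {S : Type*} [AddCancelCommMonoid S]

/-- The class `[s]` of `s` in `S_red`. -/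
def cls (s : S) : Red S := (assocCon S).mk' s

/-- `a` is an atom: a nonzero nonunit such that in any decomposition
`b + c = a`, one of `b`, `c` is a unit. -/
def IsAddAtom {M : Type*} [AddMonoid M] (a : M) : Prop :=
  a ≠ 0 ∧ ¬ IsAddUnit a ∧ ∀ b c : M, b + c = a → IsAddUnit b ∨ IsAddUnit c

/-- The length `|(c_a)|` of a tuple. -/
def flen (c : Red S →₀ ℕ) : ℕ := c.sum fun _ n => n

/-- The factorization homomorphism `φ_S`. -/
def phi (c : Red S →₀ ℕ) : Red S := c.sum fun x n => n • x

/-- The set of factorizations `Z(s)`: finitely supported tuples indexed by the atoms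
of `S_red` summing to `[s]`. -/
def ZSet (s : S) : Set (Red S →₀ ℕ) :=
  {c | (∀ x ∈ c.support, IsAddAtom x) ∧ phi c = cls s}

/-- The longest factorization length `L(s)`. -/
noncomputable def lenL (s : S) : ℕ := sSup (flen '' ZSet s)

/-- The shortest factorization length `ℓ(s)`. -/
noncomputable def lenl (s : S) : ℕ := sInf (flen '' ZSet s)

/-- `L(s)` is (defined and) finite. -/
def LFinite (s : S) : Prop := (ZSet s).Nonempty ∧ BddAbove (flen '' ZSet s)

/-- `Repl_m(S)`: tuples over the atoms of `S_red` other than `[m]` whose evaluation,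
after subtracting `m`, stays in `S`. -/
def ReplSet (m : S) : Set (Red S →₀ ℕ) :=
  {c | (∀ x ∈ c.support, IsAddAtom x ∧ x ≠ cls m) ∧ ∃ s t : S, cls s = phi c ∧ m + t = s}

/-- `MinRepl_m(S)`: the minimal elements of `Repl_m(S)` under the coordinatewise order. -/
def MinReplSet (m : S) : Set (Red S →₀ ℕ) :=
  {c ∈ ReplSet m | ∀ c' ∈ ReplSet m, c' ≤ c → c' = c}

/-! Everything rests on one exchange: if `c + d` factors `r + s`, `c` factors `r + t` and `w`
factors `t`, then cancelling `c` and `r` shows that `w + d` factors `s`. Take a shortest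
factorization `z` of `s + m`. If `[m]` occurs in `z`, removing one copy leaves a factorization
of `s`. Otherwise `z ∈ Repl_m(S)`, and `z` lies above a minimal element `c`, say with value `m + t`;
replacing `c` in `z` by a shortest factorization of `t` gives a factorization of `s`, shorter
than `z` by at least one because `ℓ(t) + 1 = ℓ(m + t) ≤ |c|`. -/

section Red

lemma cls_add (s t : S) : cls (s + t) = cls s + cls t :=
  (assocCon S).mk'.map_add s t

lemma cls_eq_cls {s t : S} : cls s = cls t ↔ ∃ u : AddUnits S, s + u = t :=
  (assocCon S).eq

lemma cls_surjective : Function.Surjective (cls : S → Red S) :=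
  AddCon.mk'_surjective

instance : IsLeftCancelAdd (Red S) where
  add_left_cancel x y z h := by
    obtain ⟨a, rfl⟩ := cls_surjective x
    obtain ⟨b, rfl⟩ := cls_surjective y
    obtain ⟨c, rfl⟩ := cls_surjective z
    simp only [← cls_add, cls_eq_cls, add_assoc, add_right_inj] at h
    exact cls_eq_cls.2 h

lemma isAddUnit_cls {s : S} : IsAddUnit (cls s) ↔ IsAddUnit s := by
  refine ⟨fun h => ?_, fun h => h.map (assocCon S).mk'⟩
  obtain ⟨y, hy⟩ := h.exists_neg
  obtain ⟨t, rfl⟩ := cls_surjective y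
  obtain ⟨u, hu⟩ : ∃ u : AddUnits S, s + t + u = 0 := cls_eq_cls.1 ((cls_add s t).trans hy)
  exact .of_add_eq_zero _ (by rwa [← add_assoc])

lemma isAddAtom_cls {m : S} (hm : IsAddAtom m) : IsAddAtom (cls m) := by
  obtain ⟨-, hm_unit, hm_split⟩ := hm
  have hcls_unit : ¬ IsAddUnit (cls m) := isAddUnit_cls.not.2 hm_unit
  refine ⟨fun h => hcls_unit (h ▸ isAddUnit_zero), hcls_unit, fun x y hxy => ?_⟩
  obtain ⟨a, rfl⟩ := cls_surjective x
  obtain ⟨b, rfl⟩ := cls_surjective y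
  obtain ⟨u, hu⟩ : ∃ u : AddUnits S, a + b + u = m := cls_eq_cls.1 ((cls_add a b).trans hxy)
  simp only [isAddUnit_cls]
  exact (hm_split a (b + u) (by rwa [← add_assoc])).imp_right isAddUnit_of_add_isAddUnit_left

end Red

section Factorizations

variable {r s t : S} {c d w z : Red S →₀ ℕ}

lemma flen_add (c d : Red S →₀ ℕ) : flen (c + d) = flen c + flen d :=
  Finsupp.sum_add_index' (fun _ => rfl) fun _ _ _ => rfl

lemma flen_single (x : Red S) : flen (Finsupp.single x 1) = 1 :=
  Finsupp.sum_single_index rfl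

lemma phi_add (c d : Red S →₀ ℕ) : phi (c + d) = phi c + phi d :=
  Finsupp.sum_add_index' zero_nsmul fun x i j => add_nsmul x i j

lemma phi_single (x : Red S) : phi (Finsupp.single x 1) = x :=
  (Finsupp.sum_single_index (zero_nsmul x)).trans (one_nsmul x)

lemma single_mem_ZSet {m : S} (hm : IsAddAtom m) : Finsupp.single (cls m) 1 ∈ ZSet m := by
  refine ⟨fun x hx => ?_, phi_single _⟩
  obtain rfl := Finset.mem_singleton.1 (Finsupp.support_single_subset hx)
  exact isAddAtom_cls hm

lemma add_mem_ZSet (hc : c ∈ ZSet s) (hd : d ∈ ZSet t) : c + d ∈ ZSet (s + t) := by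
  classical
  refine ⟨fun x hx => ?_, by rw [phi_add, hc.2, hd.2, cls_add]⟩
  exact (Finset.mem_union.1 (Finsupp.support_add hx)).elim (hc.1 x) (hd.1 x)

lemma mem_ZSet_of_add_mem_ZSet (hc : c ∈ ZSet s) (hcd : c + d ∈ ZSet (s + t)) : d ∈ ZSet t := by
  refine ⟨fun x hx => hcd.1 x (Finsupp.support_mono le_add_self hx), ?_⟩
  have hphi : phi c + phi d = cls s + cls t := by rw [← phi_add, hcd.2, cls_add]
  rw [hc.2] at hphi
  exact add_left_cancel hphi

lemma add_mem_ZSet_of_exchange (hc : c ∈ ZSet (r + t)) (hcd : c + d ∈ ZSet (r + s))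
    (hw : w ∈ ZSet t) : w + d ∈ ZSet s := by
  refine mem_ZSet_of_add_mem_ZSet hc ?_
  have hcdw := add_mem_ZSet hcd hw
  rwa [add_right_comm r, add_assoc c, add_comm d] at hcdw

lemma lenl_le_flen (hz : z ∈ ZSet s) : lenl s ≤ flen z :=
  Nat.sInf_le ⟨z, hz, rfl⟩

lemma exists_flen_eq_lenl (hs : (ZSet s).Nonempty) : ∃ z ∈ ZSet s, flen z = lenl s :=
  Nat.sInf_mem (hs.image flen)

lemma lenl_add_le (hs : (ZSet s).Nonempty) (ht : (ZSet t).Nonempty) :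
    lenl (s + t) ≤ lenl s + lenl t := by
  obtain ⟨c, hc, hc_len⟩ := exists_flen_eq_lenl hs
  obtain ⟨d, hd, hd_len⟩ := exists_flen_eq_lenl ht
  rw [← hc_len, ← hd_len, ← flen_add]
  exact lenl_le_flen (add_mem_ZSet hc hd)

lemma lenl_le_one_of_isAddAtom {m : S} (hm : IsAddAtom m) : lenl m ≤ 1 :=
  (lenl_le_flen (single_mem_ZSet hm)).trans_eq (flen_single _)

lemma lenl_le_lenl_add_flen_of_exchange (ht : (ZSet t).Nonempty) (hc : c ∈ ZSet (r + t))
    (hcd : c + d ∈ ZSet (r + s)) : lenl s ≤ lenl t + flen d := by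
  obtain ⟨w, hw, hw_len⟩ := exists_flen_eq_lenl ht
  rw [← hw_len, ← flen_add]
  exact lenl_le_flen (add_mem_ZSet_of_exchange hc hcd hw)

end Factorizations

section Replacements

variable {m s : S} {c z : Red S →₀ ℕ}

lemma mem_ReplSet_iff : c ∈ ReplSet m ↔ cls m ∉ c.support ∧ ∃ t, c ∈ ZSet (m + t) := by
  constructor
  · rintro ⟨hc, _, t, hphi, rfl⟩
    exact ⟨fun hmem => (hc _ hmem).2 rfl, t, fun x hx => (hc x hx).1, hphi.symm⟩
  · rintro ⟨hmem, t, hc, hphi⟩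
    exact ⟨fun x hx => ⟨hc x hx, ne_of_mem_of_not_mem hx hmem⟩, m + t, t, hphi.symm, rfl⟩

lemma exists_mem_MinReplSet_le (hz : z ∈ ReplSet m) : ∃ c ∈ MinReplSet m, c ≤ z := by
  obtain ⟨c, hcz, hc⟩ := exists_minimal_le_of_wellFoundedLT (· ∈ ReplSet m) z hz
  exact ⟨c, ⟨hc.prop, fun _ => hc.eq_of_le⟩, hcz⟩

lemma lenl_add_one_le_flen_of_mem_support (hm : IsAddAtom m) (hz : z ∈ ZSet (m + s))
    (hmz : cls m ∈ z.support) : lenl s + 1 ≤ flen z := by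
  have hle : Finsupp.single (cls m) 1 ≤ z :=
    Finsupp.single_le_iff.2 (Nat.one_le_iff_ne_zero.2 (Finsupp.mem_support_iff.1 hmz))
  obtain ⟨d, rfl⟩ := exists_add_of_le hle
  rw [flen_add, flen_single, add_comm]
  gcongr
  exact lenl_le_flen (mem_ZSet_of_add_mem_ZSet (single_mem_ZSet hm) hz)

lemma lenl_add_one_le_flen_of_notMem_support (hZ : ∀ t : S, (ZSet t).Nonempty)
    (hmin : ∀ c ∈ MinReplSet m, ∀ t, c ∈ ZSet (m + t) → lenl t + 1 ≤ lenl (m + t))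
    (hz : z ∈ ZSet (m + s)) (hmz : cls m ∉ z.support) : lenl s + 1 ≤ flen z := by
  obtain ⟨c, hc_min, hcz⟩ := exists_mem_MinReplSet_le (mem_ReplSet_iff.2 ⟨hmz, s, hz⟩)
  obtain ⟨d, rfl⟩ := exists_add_of_le hcz
  obtain ⟨-, t, hc⟩ := mem_ReplSet_iff.1 hc_min.1
  calc
    lenl s + 1 ≤ lenl t + flen d + 1 := by
      gcongr
      exact lenl_le_lenl_add_flen_of_exchange (hZ t) hc hz
    _ = lenl t + 1 + flen d := add_right_comm ..
    _ ≤ flen c + flen d := by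
      gcongr
      exact (hmin c hc_min t hc).trans (lenl_le_flen hc)
    _ = flen (c + d) := (flen_add c d).symm

end Replacements

theorem statement5_general (m : S) (hm : IsAddAtom m) (hZ : ∀ s : S, (ZSet s).Nonempty) :
    (∀ s : S, lenl (s + m) = lenl s + 1) ↔
      (∀ c ∈ MinReplSet m, ∀ s t : S, cls s = phi c → m + t = s → lenl s = lenl t + 1) := by
  simp only [add_comm _ m]
  constructor
  · rintro h _ - _ t - rfl
    exact h t
  · refine fun h s => le_antisymm ?_ ?_
    · rw [add_comm m]
      exact (lenl_add_le (hZ s) (hZ m)).trans (by gcongr; exact lenl_le_one_of_isAddAtom hm)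
    · have hmin : ∀ c ∈ MinReplSet m, ∀ t, c ∈ ZSet (m + t) → lenl t + 1 ≤ lenl (m + t) :=
        fun c hc t hct => (h c hc (m + t) t hct.2.symm rfl).ge
      obtain ⟨z, hz, hz_len⟩ := exists_flen_eq_lenl (hZ (m + s))
      rw [← hz_len]
      by_cases hmz : cls m ∈ z.support
      · exact lenl_add_one_le_flen_of_mem_support hm hz hmz
      · exact lenl_add_one_le_flen_of_notMem_support hZ hmin hz hmz

theorem statement5 {S : Type*} [AddCancelCommMonoid S] (m : S)
    (hm : IsAddAtom m) (hfin : ∀ s : S, LFinite s) :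
    (∀ s : S, lenl (s + m) = lenl s + 1) ↔
      (∀ c ∈ MinReplSet m, ∀ s t : S, cls s = phi c → m + t = s → lenl s = lenl t + 1) :=
  statement5_general m hm fun s => (hfin s).1

end Paper
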